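/- Let t be a fixed positive integer and N = 9t. There exists a constant c' depending only on N such that for every alphabet size q, every q-ary 3-traceability code C of length N containing at least three codewords admits a subset X ⊆ C with |X| ≤ c'·q^t such that any two distinct codewords of C' = C \ X are at Hamming distance at least d(C)+1, where d(C) is the minimum distance of C (in particular this holds vacuously if C' has fewer than two codewords). -/

import Mathlib

/-- The descendant set of a set `D` of codewords: all words `x` such that in every
coordinate `i`, the symbol `x i` appears as the `i`-th symbol of some codeword of `D`. -/
def descSet {N q : ℕ} (D : Finset (Fin N → Fin q)) : Set (Fin N → Fin q) :=
  {x | ∀ i : Fin N, ∃ c ∈ D, x i = c i}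

/-- `C` is a `t`-traceability (t-TA) code: for every `D ⊆ C` with `|D| ≤ t` and every
`x ∈ desc(D)`, the minimum of `d(x,c)` over `c ∈ D` is strictly smaller than `d(x,y)`
for every `y ∈ C \ D`. -/
def IsTA {N q : ℕ} (t : ℕ) (C : Finset (Fin N → Fin q)) : Prop :=
  ∀ D : Finset (Fin N → Fin q), D ⊆ C → D.card ≤ t →
    ∀ x ∈ descSet D, ∃ c ∈ D, ∀ y ∈ C \ D, hammingDist x c < hammingDist x y

/-- The minimum Hamming distance of a code (junk value `0` if `|C| ≤ 1`). -/
noncomputable def minDist {N q : ℕ} (C : Finset (Fin N → Fin q)) : ℕ :=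
  sInf {d : ℕ | ∃ x ∈ C, ∃ y ∈ C, x ≠ y ∧ hammingDist x y = d}

/-- `V` is good for `x`: there are words of `C` agreeing with `x` on `V` and avoiding
any three given words outside `V`. -/
def GoodSet {N q : ℕ} (C : Finset (Fin N → Fin q)) (x : Fin N → Fin q)
    (V : Finset (Fin N)) : Prop :=
  ∀ F : Finset (Fin N → Fin q), F.card ≤ 3 →
    ∃ y ∈ C, (∀ i ∈ V, y i = x i) ∧ ∀ f ∈ F, ∀ i, i ∉ V → y i ≠ f i

/-- no proper good set of `x` contains `U`. -/
def BadFor {N q : ℕ} (C : Finset (Fin N → Fin q)) (x : Fin N → Fin q)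
    (U : Finset (Fin N)) : Prop :=
  ∀ V : Finset (Fin N), U ⊆ V → V ≠ Finset.univ → ¬ GoodSet C x V

lemma goodSet_congr {N q : ℕ} (C : Finset (Fin N → Fin q)) (x x' : Fin N → Fin q)
    (V : Finset (Fin N)) (h : ∀ i ∈ V, x i = x' i) (hg : GoodSet C x V) : GoodSet C x' V := by
  intro F hF
  obtain ⟨y, hy, h1, h2⟩ := hg F hF
  exact ⟨y, hy, fun i hi => (h1 i hi).trans (h i hi), h2⟩

open Classical in
lemma bad_count {N q : ℕ} (C : Finset (Fin N → Fin q)) (n : ℕ) :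
    ∀ (U : Finset (Fin N)) (p : Fin N → Fin q), U.card + n = N →
      (C.filter (fun x => (∀ i ∈ U, x i = p i) ∧ BadFor C x U)).card ≤ (3 * N) ^ n := by
  induction n with
  | zero =>
    intro U p hU
    have hU' : U = Finset.univ := by
      apply Finset.eq_univ_of_card
      simpa using hU
    subst hU'
    simp only [pow_zero]
    rw [Finset.card_le_one]
    intro a ha b hb
    simp only [Finset.mem_filter] at ha hb
    funext i
    rw [ha.2.1 i (Finset.mem_univ i), hb.2.1 i (Finset.mem_univ i)]
  | succ n ih =>
    intro U p hU
    rcases (C.filter (fun x => (∀ i ∈ U, x i = p i) ∧ BadFor C x U)).eq_empty_or_nonempty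
      with h0 | ⟨x0, hx0⟩
    · rw [h0]; simp
    · simp only [Finset.mem_filter] at hx0
      have hne : U ≠ Finset.univ := by
        rintro rfl
        simp at hU
      have hng := hx0.2.2 U (Finset.Subset.refl _) hne
      unfold GoodSet at hng
      push Not at hng
      obtain ⟨F, hF, hall⟩ := hng
      have hsub : C.filter (fun x => (∀ i ∈ U, x i = p i) ∧ BadFor C x U) ⊆
          (F ×ˢ (Uᶜ)).biUnion (fun fi => C.filter (fun x =>
            (∀ j ∈ insert fi.2 U, x j = (Function.update p fi.2 (fi.1 fi.2)) j) ∧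
              BadFor C x (insert fi.2 U))) := by
        intro x hx
        simp only [Finset.mem_filter] at hx
        obtain ⟨hxC, hxp, hxb⟩ := hx
        obtain ⟨f, hf, i, hi, hxi⟩ := hall x hxC
          (fun i hi => (hxp i hi).trans (hx0.2.1 i hi).symm)
        rw [Finset.mem_biUnion]
        refine ⟨(f, i), by simp [hf, hi], ?_⟩
        simp only [Finset.mem_filter]
        refine ⟨hxC, ?_, fun V hV => hxb V ((Finset.subset_insert _ _).trans hV)⟩
        intro j hj
        by_cases hji : j = i
        · subst hji; simpa using hxi
        · rw [Function.update_of_ne hji]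
          exact hxp j ((Finset.mem_insert.1 hj).resolve_left hji)
      refine (Finset.card_le_card hsub).trans ?_
      refine (Finset.card_biUnion_le_card_mul _ _ ((3 * N) ^ n) ?_).trans ?_
      · rintro ⟨f, i⟩ hfi
        apply ih
        have : i ∉ U := by
          have := (Finset.mem_product.1 hfi).2
          simpa using this
        rw [Finset.card_insert_of_notMem this]
        omega
      · rw [Finset.card_product, pow_succ, mul_comm]
        apply Nat.mul_le_mul_left
        apply Nat.mul_le_mul hF
        exact (Finset.card_le_univ _).trans (by simp)

open Classical in
lemma bad_count_T {N q : ℕ} (C : Finset (Fin N → Fin q)) (T : Finset (Fin N)) (t : ℕ)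
    (hT : T.card = t) :
    (C.filter (fun x => BadFor C x T)).card ≤ (3 * N) ^ (N - t) * q ^ t := by
  have hle : T.card ≤ N := (Finset.card_le_univ T).trans (by simp)
  have := Finset.card_le_mul_card_image_of_maps_to
    (s := C.filter (fun x => BadFor C x T)) (t := (Finset.univ : Finset (T → Fin q)))
    (f := fun x (i : T) => x i) (fun _ _ => Finset.mem_univ _) ((3 * N) ^ (N - t)) ?_
  · simpa [hT] using this
  · intro b _
    rcases (Finset.filter (fun x : Fin N → Fin q => (fun i : T => x i) = b)
      (C.filter (fun x => BadFor C x T))).eq_empty_or_nonempty with h0 | ⟨x0, hx0⟩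
    · rw [h0]; simp
    · refine le_trans (Finset.card_le_card ?_) (bad_count C (N - t) T x0 (by omega))
      intro x hx
      simp only [Finset.mem_filter] at hx hx0 ⊢
      refine ⟨hx.1.1, fun i hi => ?_, hx.1.2⟩
      exact congrFun (hx.2.trans hx0.2.symm) ⟨i, hi⟩

lemma three_split {α : Type*} [DecidableEq α] (R : Finset α) (b1 b2 b3 : ℕ)
    (h : R.card ≤ b1 + b2 + b3) :
    ∃ R1 R2 : Finset α, R1.card ≤ b1 ∧ R2.card ≤ b2 ∧ ((R \ R1) \ R2).card ≤ b3 := by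
  obtain ⟨R1, h1, h1c⟩ := Finset.exists_subset_card_eq (min_le_left R.card b1)
  obtain ⟨R2, h2, h2c⟩ := Finset.exists_subset_card_eq (min_le_left (R \ R1).card b2)
  refine ⟨R1, R2, by omega, by omega, ?_⟩
  rw [Finset.card_sdiff_of_subset h2, h2c, Finset.card_sdiff_of_subset h1]
  rw [Finset.card_sdiff_of_subset h1] at h2c
  omega

lemma step_set {N q t : ℕ} (htN : t ≤ N) (C : Finset (Fin N → Fin q)) (x : Fin N → Fin q)
    (hx : ∀ T : Finset (Fin N), T.card = t → ∃ V, T ⊆ V ∧ V ≠ Finset.univ ∧ GoodSet C x V)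
    (S : Finset (Fin N)) :
    ∃ V, V ≠ Finset.univ ∧ GoodSet C x V ∧
      ((S ∪ V).card = N ∨ S.card + t ≤ (S ∪ V).card) := by
  by_cases hS : t ≤ (Sᶜ).card
  · obtain ⟨T, hTS, hT⟩ := Finset.exists_subset_card_eq hS
    obtain ⟨V, hV, hV1, hV2⟩ := hx T hT
    refine ⟨V, hV1, hV2, Or.inr ?_⟩
    have hd : Disjoint S T := by
      rw [Finset.disjoint_left]
      intro a ha hb
      have := hTS hb
      simp [ha] at this
    rw [← hT, ← Finset.card_union_of_disjoint hd]
    exact Finset.card_le_card (Finset.union_subset_union_right hV)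
  · obtain ⟨T, hTS, _, hT⟩ := Finset.exists_subsuperset_card_eq (Finset.subset_univ (Sᶜ))
      (le_of_not_ge hS) (by simpa using htN)
    obtain ⟨V, hV, hV1, hV2⟩ := hx T hT
    refine ⟨V, hV1, hV2, Or.inl ?_⟩
    have : S ∪ V = Finset.univ := by
      ext a
      simp only [Finset.mem_union, Finset.mem_univ, iff_true]
      by_cases ha : a ∈ S
      · exact Or.inl ha
      · exact Or.inr (hV (hTS (by simpa using ha)))
    rw [this]; simp

lemma dist_lower {N q : ℕ} (z y : Fin N → Fin q) (A : Finset (Fin N))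
    (h : ∀ i, z i = y i → i ∈ A) : N ≤ hammingDist z y + A.card := by
  have h1 : Aᶜ ⊆ Finset.univ.filter (fun i => z i ≠ y i) := by
    intro i hi
    simp only [Finset.mem_filter, Finset.mem_univ, true_and]
    intro he
    exact (Finset.mem_compl.1 hi) (h i he)
  have h2 := Finset.card_le_card h1
  have h3 := Finset.card_compl_add_card A
  simp only [Fintype.card_fin] at h3
  unfold hammingDist
  omega

lemma dist_upper {N q : ℕ} (z y : Fin N → Fin q) (A : Finset (Fin N))
    (h : ∀ i ∈ A, z i = y i) : hammingDist z y + A.card ≤ N := by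
  have h1 : Finset.univ.filter (fun i => z i ≠ y i) ⊆ Aᶜ := by
    intro i hi
    simp only [Finset.mem_filter, Finset.mem_univ, true_and] at hi
    exact Finset.mem_compl.2 (fun he => hi (h i he))
  have h2 := Finset.card_le_card h1
  have h3 := Finset.card_compl_add_card A
  simp only [Fintype.card_fin] at h3
  unfold hammingDist
  omega

open Classical in
lemma main_contra {N q t : ℕ} (hN : N = 9 * t) (C : Finset (Fin N → Fin q))
    (hTA : IsTA 3 C) (x : Fin N → Fin q) (hxC : x ∈ C)
    (hx : ∀ T : Finset (Fin N), T.card = t →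
      ∃ V, T ⊆ V ∧ V ≠ Finset.univ ∧ GoodSet C x V) : False := by
  have htN : t ≤ N := by omega
  have hcard : ∀ A : Finset (Fin N), A.card ≤ N := fun A =>
    (Finset.card_le_univ A).trans (by simp)
  obtain ⟨T, _, hT⟩ := Finset.exists_subset_card_eq
    (s := (Finset.univ : Finset (Fin N))) (n := t) (by simpa using htN)
  obtain ⟨V0, hTV0, hV0, hV0g⟩ := hx T hT
  obtain ⟨U1, hU1, hmax⟩ := Finset.exists_max_image
    (Finset.univ.filter (fun V : Finset (Fin N) => V ≠ Finset.univ ∧ GoodSet C x V))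
    Finset.card ⟨V0, by simp [hV0, hV0g]⟩
  simp only [Finset.mem_filter, Finset.mem_univ, true_and] at hU1 hmax
  obtain ⟨hU1n, hU1g⟩ := hU1
  have ha1 : t ≤ U1.card := by
    rw [← hT]; exact (Finset.card_le_card hTV0).trans (hmax V0 ⟨hV0, hV0g⟩)
  obtain ⟨U2, hU2n, hU2g, hU2⟩ := step_set htN C x hx U1
  obtain ⟨U3, hU3n, hU3g, hU3⟩ := step_set htN C x hx (U1 ∪ U2)
  have ha2 := hmax U2 ⟨hU2n, hU2g⟩
  have ha3 := hmax U3 ⟨hU3n, hU3g⟩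
  obtain ⟨y1, hy1C, hy1, hy1F⟩ := hU1g {x} (by simp)
  obtain ⟨y2, hy2C, hy2, hy2F⟩ := hU2g {x, y1} (Finset.card_le_two.trans (by norm_num))
  obtain ⟨y3, hy3C, hy3, hy3F⟩ := hU3g {x, y1, y2} Finset.card_le_three
  have e1x : ∀ i, i ∉ U1 → y1 i ≠ x i := hy1F x (by simp)
  have e2x : ∀ i, i ∉ U2 → y2 i ≠ x i := hy2F x (by simp)
  have e21 : ∀ i, i ∉ U2 → y2 i ≠ y1 i := hy2F y1 (by simp)
  have e3x : ∀ i, i ∉ U3 → y3 i ≠ x i := hy3F x (by simp)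
  have e31 : ∀ i, i ∉ U3 → y3 i ≠ y1 i := hy3F y1 (by simp)
  have e32 : ∀ i, i ∉ U3 → y3 i ≠ y2 i := hy3F y2 (by simp)
  have hne : ∀ (U : Finset (Fin N)) (y : Fin N → Fin q), U ≠ Finset.univ →
      (∀ i, i ∉ U → y i ≠ x i) → x ≠ y := by
    rintro U y hU h rfl
    apply hU
    ext i
    simp only [Finset.mem_univ, iff_true]
    by_contra hi
    exact h i hi rfl
  have n1 := hne U1 y1 hU1n e1x
  have n2 := hne U2 y2 hU2n e2x
  have n3 := hne U3 y3 hU3n e3x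
  set M := U1 ∪ U2 ∪ U3 with hM
  have hm12 : (U1 ∪ U2).card ≤ M.card := Finset.card_le_card Finset.subset_union_left
  have hm1 : U1.card ≤ (U1 ∪ U2).card := Finset.card_le_card Finset.subset_union_left
  have hMN := hcard M
  have hMc := Finset.card_compl_add_card M
  simp only [Fintype.card_fin] at hMc
  obtain ⟨R1, R2, hR1, hR2, hR3⟩ := three_split (Mᶜ) (M.card - U1.card) (M.card - U2.card)
    (M.card - U3.card) (by omega)
  set z : Fin N → Fin q := fun i => if i ∈ M then x i else if i ∈ R1 then y1 i
    else if i ∈ R2 then y2 i else y3 i with hz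
  obtain ⟨c, hcD, hc⟩ := hTA {y1, y2, y3} (by
      intro y hy
      simp only [Finset.mem_insert, Finset.mem_singleton] at hy
      rcases hy with rfl | rfl | rfl <;> assumption) Finset.card_le_three z (by
      intro i
      by_cases hi : i ∈ M
      · have hzi : z i = x i := by simp [hz, hi]
        have hi' := hi
        rw [hM, Finset.mem_union, Finset.mem_union] at hi'
        rcases hi' with (h | h) | h
        · exact ⟨y1, by simp, by rw [hzi, hy1 i h]⟩
        · exact ⟨y2, by simp, by rw [hzi, hy2 i h]⟩
        · exact ⟨y3, by simp, by rw [hzi, hy3 i h]⟩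
      · by_cases h1 : i ∈ R1
        · exact ⟨y1, by simp, by simp [hz, hi, h1]⟩
        · by_cases h2 : i ∈ R2
          · exact ⟨y2, by simp, by simp [hz, hi, h1, h2]⟩
          · exact ⟨y3, by simp, by simp [hz, hi, h1, h2]⟩)
  have hlt := hc x (by simp [hxC, n1, n2, n3])
  have hup := dist_upper z x M (fun i hi => by simp [hz, hi])
  have hnot : ∀ i, i ∉ M → i ∉ U1 ∧ i ∉ U2 ∧ i ∉ U3 := by
    intro i hi
    simp only [hM, Finset.mem_union, not_or] at hi
    exact ⟨hi.1.1, hi.1.2, hi.2⟩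
  have d1 := dist_lower z y1 (U1 ∪ R1) (by
    intro i h
    by_contra hi
    simp only [Finset.mem_union, not_or] at hi
    by_cases hiM : i ∈ M
    · simp only [hz, hiM, if_true] at h
      exact e1x i hi.1 h.symm
    · obtain ⟨k1, k2, k3⟩ := hnot i hiM
      by_cases h2 : i ∈ R2
      · simp only [hz, hiM, hi.2, h2, if_true, if_false] at h
        exact e21 i k2 h
      · simp only [hz, hiM, hi.2, h2, if_false] at h
        exact e31 i k3 h)
  have d2 := dist_lower z y2 (U2 ∪ R2) (by
    intro i h
    by_contra hi
    simp only [Finset.mem_union, not_or] at hi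
    by_cases hiM : i ∈ M
    · simp only [hz, hiM, if_true] at h
      exact e2x i hi.1 h.symm
    · obtain ⟨k1, k2, k3⟩ := hnot i hiM
      by_cases h1 : i ∈ R1
      · simp only [hz, hiM, h1, if_true, if_false] at h
        exact e21 i k2 h.symm
      · simp only [hz, hiM, h1, hi.2, if_false] at h
        exact e32 i k3 h)
  have d3 := dist_lower z y3 (U3 ∪ ((Mᶜ \ R1) \ R2)) (by
    intro i h
    by_contra hi
    simp only [Finset.mem_union, not_or] at hi
    by_cases hiM : i ∈ M
    · simp only [hz, hiM, if_true] at h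
      exact e3x i hi.1 h.symm
    · obtain ⟨k1, k2, k3⟩ := hnot i hiM
      by_cases h1 : i ∈ R1
      · simp only [hz, hiM, h1, if_true, if_false] at h
        exact e31 i k3 h.symm
      · by_cases h2 : i ∈ R2
        · simp only [hz, hiM, h1, h2, if_true, if_false] at h
          exact e32 i k3 h.symm
        · apply hi.2
          simp [hiM, h1, h2])
  have u1 := Finset.card_union_le U1 R1
  have u2 := Finset.card_union_le U2 R2
  have u3 := Finset.card_union_le U3 ((Mᶜ \ R1) \ R2)
  simp only [Finset.mem_insert, Finset.mem_singleton] at hcD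
  rcases hcD with rfl | rfl | rfl <;> omega

/-- Let `t ≥ 1` and `N = 9t`. There is a constant `c'` depending only on `N` such
that every `q`-ary 3-traceability code `C` of length `N` with at least three
codewords admits a subset `X ⊆ C` with `|X| ≤ c'·q^t` such that any two distinct
codewords of `C \ X` are at Hamming distance at least `d(C) + 1`. -/
theorem stmt_8 (t : ℕ) (ht : 1 ≤ t) (N : ℕ) (hN : N = 9 * t) :
    ∃ c' : ℕ, ∀ q : ℕ, ∀ C : Finset (Fin N → Fin q),
      IsTA 3 C → 3 ≤ C.card →
        ∃ X ⊆ C, X.card ≤ c' * q ^ t ∧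
          ∀ x ∈ C \ X, ∀ y ∈ C \ X, x ≠ y →
            minDist C + 1 ≤ hammingDist x y := by
  classical
  refine ⟨N.choose t * (3 * N) ^ (N - t), fun q C hTA _ => ⟨C, Finset.Subset.refl _, ?_, ?_⟩⟩
  · have hsub : C ⊆ (Finset.powersetCard t (Finset.univ : Finset (Fin N))).biUnion
        (fun T => C.filter (fun x => BadFor C x T)) := by
      intro x hxC
      by_contra hcon
      apply main_contra hN C hTA x hxC
      intro T hT
      by_contra hno
      apply hcon
      rw [Finset.mem_biUnion]
      refine ⟨T, by simp [Finset.mem_powersetCard, hT], ?_⟩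
      simp only [Finset.mem_filter]
      exact ⟨hxC, fun V h1 h2 h3 => hno ⟨V, h1, h2, h3⟩⟩
    refine (Finset.card_le_card hsub).trans ?_
    refine (Finset.card_biUnion_le_card_mul _ _ ((3 * N) ^ (N - t) * q ^ t) ?_).trans ?_
    · intro T hT
      exact bad_count_T C T t (Finset.mem_powersetCard.1 hT).2
    · rw [Finset.card_powersetCard, mul_assoc]
      simp
  · intro x hx
    simp at hx
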